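/- arXiv:1505.02315 — 2 statements merged into one kernel-verified Lean document; each statement's English description precedes it below -/
import Mathlib

section
/- Let U and V be finite-dimensional vector spaces over a field K, and S a linear subspace of L(U,V) with codim S ≤ 2·dim V − 3, and codim S ≤ 2·dim V − 4 if K has exactly 2 elements. Assume there is a vector x ∈ U with dim Sx = 1, where Sx = {s(x) : s ∈ S}, and let F : S → V be an additive group homomorphism that is non-local and quasi-range-compatible with respect to some 1-dimensional linear subspace D of V. Then either (a) F is the sum of a local map and a map of the form s ↦ φ(s(x)) for some additive group endomorphism φ of Sx that is not K-linear, or (b) D = Sx and F is the sum of a local map and a map of the form s ↦ φ(s(x)) for some additive group homomorphism φ : D → V. -/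
/-!
For a functional `f` on `V` that does not vanish on `D`, quasi-range-compatibility of `F` says that
`f ∘ s = 0` implies `f (F s) = 0`. If moreover `f ∘ S` is the whole of `U*`, then `f ∘ F` is
`s ↦ Φ_f (f ∘ s)` for an additive form `Φ_f` on `U*`. The functionals with `f ∘ S ≠ U*` span a
space of dimension at most `codim S`. So if `codim S ≤ dim V - 2` there are enough functionals left
to compare the forms `Φ_f`: they are all equal and linear, hence evaluation at some vector of `U`,
and `F` is local. Over the field with two elements one more dimension is used up by the comparison,
as there are too few linear combinations of two functionals.

When `dim Sx = 1`, the maps of `S` killing `x` form an operator space on `U ⧸ K x` of codimension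
`codim S - dim V + 1`, to which the local case applies. So `F` minus a local map factors through
`s ↦ s x`, by some additive `φ`. If `D ≠ Sx`, testing against functionals that vanish on `Sx` but
not on `D` shows that `φ` preserves `Sx`; were it linear there, `F` would be local.
-/

open Module Function

section Avoidance

theorem exists_ne_and_ne_of_natCard_ne_two {α : Type*} [Nontrivial α] (h : Nat.card α ≠ 2)
    (a b : α) : ∃ c, c ≠ a ∧ c ≠ b := by
  obtain rfl | hab := eq_or_ne a b
  · simpa using exists_ne a
  · by_contra! hcover
    refine h (Nat.card_eq_two_iff.mpr ⟨a, b, hab, Set.eq_univ_of_forall fun c => ?_⟩)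
    exact or_iff_not_imp_left.mpr (hcover c)

theorem exists_notMem_and_notMem {R M : Type*} [Ring R] [AddCommGroup M] [Module R M]
    {A B : Submodule R M} (hA : A ≠ ⊤) (hB : B ≠ ⊤) : ∃ u, u ∉ A ∧ u ∉ B := by
  obtain ⟨p, hpA⟩ := SetLike.exists_not_mem_of_ne_top A hA
  obtain ⟨q, hqB⟩ := SetLike.exists_not_mem_of_ne_top B hB
  by_cases hpB : p ∈ B
  · by_cases hqA : q ∈ A
    · exact ⟨p + q, by rwa [A.add_mem_iff_left hqA], by rwa [B.add_mem_iff_right hpB]⟩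
    · exact ⟨q, hqA, hqB⟩
  · exact ⟨p, hpA, hpB⟩

variable {K W : Type*} [Field K] [AddCommGroup W] [Module K W]

theorem exists_notMem_and_apply_ne_zero_of_natCard_ne_two (hK : Nat.card K ≠ 2)
    {H : Submodule K W} (hH : H ≠ ⊤) {a b : W →ₗ[K] K} {u : W} (hau : a u ≠ 0) (hbu : b u ≠ 0) :
    ∃ w, w ∉ H ∧ a w ≠ 0 ∧ b w ≠ 0 := by
  by_cases huH : u ∈ H
  · obtain ⟨w, hw⟩ := SetLike.exists_not_mem_of_ne_top H hH
    obtain ⟨c, hca, hcb⟩ :=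
      exists_ne_and_ne_of_natCard_ne_two hK (-(a w) / a u) (-(b w) / b u)
    refine ⟨w + c • u, by rwa [H.add_mem_iff_left (H.smul_mem c huH)], ?_, ?_⟩
    · rw [map_add, map_smul, smul_eq_mul]
      exact fun h => hca (by rw [eq_div_iff hau]; linear_combination h)
    · rw [map_add, map_smul, smul_eq_mul]
      exact fun h => hcb (by rw [eq_div_iff hbu]; linear_combination h)
  · exact ⟨u, huH, hau, hbu⟩

theorem ker_dualEval_ne_top {v : W} (hv : v ≠ 0) : (Dual.eval K W v).ker ≠ ⊤ := by
  rwa [Ne, LinearMap.ker_eq_top, Module.eval_apply_eq_zero_iff]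

theorem exists_smul_notMem_and_apply_eq_one {H : Submodule K (Dual K W)} {f : Dual K W} {v : W}
    (hf : f ∉ H) (hv : f v ≠ 0) : ∃ c : K, c ≠ 0 ∧ c • f ∉ H ∧ (c • f) v = 1 :=
  have hc : (f v)⁻¹ ≠ 0 := inv_ne_zero hv
  ⟨(f v)⁻¹, hc, by rwa [H.smul_mem_iff hc], inv_mul_cancel₀ hv⟩

variable [FiniteDimensional K W]

theorem finrank_le_finrank_ker_inf_ker_add_two (a b : W →ₗ[K] K) :
    finrank K W ≤ finrank K ↥(a.ker ⊓ b.ker) + 2 := by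
  have hrank := (a.prod b).finrank_range_add_finrank_ker
  have hrange := (a.prod b).range.finrank_le
  rw [LinearMap.ker_prod] at hrank
  rw [finrank_prod, finrank_self] at hrange
  omega

theorem exists_notMem_and_apply_ne_zero_of_finrank_add_two_le
    {H : Submodule K W} (hH : finrank K H + 2 ≤ finrank K W) {a b : W →ₗ[K] K} {u : W}
    (hau : a u ≠ 0) (hbu : b u ≠ 0) :
    ∃ w, w ∉ H ∧ a w ≠ 0 ∧ b w ≠ 0 := by
  by_cases huH : u ∈ H
  · have hker : ¬ a.ker ⊓ b.ker ≤ H := fun hle => by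
      have heq : a.ker ⊓ b.ker = H := Submodule.eq_of_le_of_finrank_le hle <| by
        have := finrank_le_finrank_ker_inf_ker_add_two a b
        omega
      exact hau (heq ▸ huH).1
    obtain ⟨e, ⟨hae, hbe⟩, heH⟩ := SetLike.not_le_iff_exists.mp hker
    rw [SetLike.mem_coe, LinearMap.mem_ker] at hae hbe
    exact ⟨u + e, by rwa [H.add_mem_iff_right huH], by simpa [hae], by simpa [hbe]⟩
  · exact ⟨u, huH, hau, hbu⟩

theorem exists_dual_notMem_and_apply_ne_zero {H : Submodule K (Dual K W)}
    (h1 : finrank K H + 1 ≤ finrank K W) (h2 : Nat.card K = 2 → finrank K H + 2 ≤ finrank K W)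
    {v w : W} (hv : v ≠ 0) (hw : w ≠ 0) :
    ∃ f, f ∉ H ∧ f v ≠ 0 ∧ f w ≠ 0 := by
  rw [← Subspace.dual_finrank_eq (K := K) (V := W)] at h1 h2
  obtain ⟨u, huv, huw⟩ :=
    exists_notMem_and_notMem (ker_dualEval_ne_top hv) (ker_dualEval_ne_top (K := K) hw)
  by_cases hK : Nat.card K = 2
  · exact exists_notMem_and_apply_ne_zero_of_finrank_add_two_le (h2 hK) huv huw
  · refine exists_notMem_and_apply_ne_zero_of_natCard_ne_two hK ?_ huv huw
    rintro rfl
    rw [finrank_top] at h1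
    omega

end Avoidance

section AdditiveMaps

theorem exists_addMonoidHom_apply_eq_of_ker_le {A B C : Type*} [AddGroup A] [AddGroup B]
    [AddGroup C] {p : A →+ B} (hp : Surjective p) {g : A →+ C} (hg : p.ker ≤ g.ker) :
    ∃ φ : B →+ C, ∀ a, g a = φ (p a) :=
  ⟨p.liftOfSurjective hp ⟨g, hg⟩, fun a =>
    (p.liftOfRightInverse_comp_apply _ (rightInverse_surjInv hp) ⟨g, hg⟩ a).symm⟩

-- Comparing the hypothesis at `a` and at `a + 1` gives `A = B` as soon as `a ∉ {-1, -2}`.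
theorem eq_and_map_smul_of_map_smul_eq_smul {K M N : Type*} [Field K] [AddCommGroup M]
    [Module K M] [AddCommGroup N] [Module K N] (hK : Nat.card K ≠ 2) {A B : M →+ N}
    (h : ∀ a : K, a ≠ -1 → ∀ m, B (a • m) = a • A m) :
    A = B ∧ ∀ (c : K) m, B (c • m) = c • B m := by
  have hAB : A = B := by
    obtain ⟨a, ha1, ha2⟩ := exists_ne_and_ne_of_natCard_ne_two hK (-1) (-2)
    ext m
    have hsucc := h (a + 1) (fun e => ha2 (by linear_combination e)) m
    rw [add_smul, map_add, h a ha1, add_smul, one_smul, one_smul] at hsucc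
    exact (add_left_cancel hsucc).symm
  subst hAB
  refine ⟨rfl, fun c m => ?_⟩
  obtain rfl | hc := eq_or_ne c (-1)
  · simp
  · exact h c hc m

theorem map_smul_of_natCard_eq_two {K M N : Type*} [Field K] [AddCommGroup M] [Module K M]
    [AddCommGroup N] [Module K N] (hK : Nat.card K = 2) (A : M →+ N) (c : K) (m : M) :
    A (c • m) = c • A m := by
  obtain ⟨a, -, ha⟩ := (Nat.card_eq_two_iff' (0 : K)).mp hK
  obtain rfl | hc := eq_or_ne c 0
  · simp
  · obtain rfl : c = 1 := (ha c hc).trans (ha 1 one_ne_zero).symm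
    simp

end AdditiveMaps

section Codimension

variable {K A B : Type*} [Field K] [AddCommGroup A] [Module K A]
  [AddCommGroup B] [Module K B]

theorem finrank_quotient_comap_le (j : A →ₗ[K] B) (S : Submodule K B)
    [FiniteDimensional K (B ⧸ S)] :
    finrank K (A ⧸ S.comap j) ≤ finrank K (B ⧸ S) := by
  refine LinearMap.finrank_le_finrank_of_injective (f := (S.comap j).mapQ S j le_rfl) ?_
  rw [← LinearMap.ker_eq_bot, Submodule.ker_mapQ, Submodule.mkQ_map_self]

theorem finrank_comap_le_add_finrank_ker [FiniteDimensional K A] [FiniteDimensional K B]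
    (r : A →ₗ[K] B) (H : Submodule K B) :
    finrank K (H.comap r) ≤ finrank K H + finrank K r.ker := by
  have hrank := (r.domRestrict (H.comap r)).finrank_range_add_finrank_ker
  have hrange : finrank K (r.domRestrict (H.comap r)).range ≤ finrank K H := by
    rw [LinearMap.range_domRestrict]
    exact Submodule.finrank_mono (Submodule.map_comap_le r H)
  have hker : finrank K (r.domRestrict (H.comap r)).ker ≤ finrank K r.ker := by
    rw [LinearMap.ker_domRestrict]
    refine LinearMap.finrank_le_finrank_of_injective
      (f := (H.comap r).subtype.submoduleComap r.ker) fun a b hab => ?_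
    have hval := congrArg Subtype.val hab
    exact Subtype.ext (Subtype.ext hval)
  omega

theorem finrank_dualAnnihilator_eq_finrank_quotient [FiniteDimensional K A] (S : Submodule K A) :
    finrank K S.dualAnnihilator = finrank K (A ⧸ S) := by
  rw [← S.dualQuotEquivDualAnnihilator.finrank_eq, Subspace.dual_finrank_eq]

end Codimension

section OperatorSpaces

variable {K U V W : Type*} [Field K] [AddCommGroup U] [Module K U] [AddCommGroup V] [Module K V]
  [AddCommGroup W] [Module K W]

section ExceptionalFunctionals

/-- Postcomposition with `G` on an operator space `S`, as a map from `S` to `L(U, W)`. For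
`G = f₁.prod f₂` its surjectivity says that `f₁ ∘ s` and `f₂ ∘ s` can be prescribed together. -/
def postcomp (S : Submodule K (U →ₗ[K] V)) (G : V →ₗ[K] W) : S →ₗ[K] (U →ₗ[K] W) :=
  (G.compRight K).domRestrict S

@[simp]
theorem postcomp_apply (S : Submodule K (U →ₗ[K] V)) (G : V →ₗ[K] W) (s : S) :
    postcomp S G s = G ∘ₗ (s : U →ₗ[K] V) := rfl

/-- The span of the functionals `f` on `V` for which `f ∘ S` is killed by a nonzero vector of `U`;
outside of it, `f ∘ S` is all of `U*`. -/
def exceptionalDual (S : Submodule K (U →ₗ[K] V)) : Submodule K (Dual K V) :=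
  Submodule.span K {f | ∃ u : U, u ≠ 0 ∧ ∀ s ∈ S, f (s u) = 0}

theorem linearIndependent_comp_applyₗ {ι : Type*} {f : ι → Dual K V}
    (hf : LinearIndependent K f) {u : ι → U} (hu : ∀ i, u i ≠ 0) :
    LinearIndependent K fun i => (f i ∘ₗ LinearMap.applyₗ (u i) : Dual K (U →ₗ[K] V)) := by
  rw [linearIndependent_iff'] at hf ⊢
  intro t c hc i hi
  obtain ⟨α, hα⟩ : ∃ α : Dual K U, α (u i) ≠ 0 :=
    not_forall.mp (mt (forall_dual_apply_eq_zero_iff K _).mp (hu i))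
  have hsum : ∑ j ∈ t, (c j * α (u j)) • f j = 0 := by
    ext v
    simpa [mul_assoc] using LinearMap.congr_fun hc (α.smulRight v)
  exact (mul_eq_zero.mp (hf t _ hsum i hi)).resolve_right hα

theorem surjective_postcomp_of_notMem_exceptionalDual [FiniteDimensional K U]
    {S : Submodule K (U →ₗ[K] V)} {f : Dual K V} (hf : f ∉ exceptionalDual S) :
    Surjective (postcomp S f) := by
  rw [← LinearMap.range_eq_top]
  by_contra hne
  obtain ⟨ξ, hξ, hle⟩ := Submodule.exists_le_ker_of_lt_top _ (lt_top_iff_ne_top.mpr hne)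
  obtain ⟨u, rfl⟩ := (Module.evalEquiv K U).surjective ξ
  refine hf (Submodule.subset_span ⟨u, ?_, fun s hs => ?_⟩)
  · rintro rfl
    exact hξ (map_zero _)
  · exact hle ⟨⟨s, hs⟩, rfl⟩

variable [FiniteDimensional K U] [FiniteDimensional K V]

theorem finrank_exceptionalDual_le (S : Submodule K (U →ₗ[K] V)) :
    finrank K (exceptionalDual S) ≤ finrank K ((U →ₗ[K] V) ⧸ S) := by
  obtain ⟨b, hbad, hspan, hli⟩ :=
    exists_linearIndependent K {f : Dual K V | ∃ u : U, u ≠ 0 ∧ ∀ s ∈ S, f (s u) = 0}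
  have : Fintype b := @Fintype.ofFinite b hli.finite
  choose u hu hus using fun f : b => hbad f.2
  have hann : LinearIndependent K fun f : b =>
      (⟨(f : Dual K V) ∘ₗ LinearMap.applyₗ (u f),
        (Submodule.mem_dualAnnihilator _).mpr (hus f)⟩ : S.dualAnnihilator) :=
    .of_comp S.dualAnnihilator.subtype (linearIndependent_comp_applyₗ hli hu)
  calc finrank K (exceptionalDual S)
      = Fintype.card b := by
        rw [exceptionalDual, ← hspan, ← finrank_span_eq_card hli, Subtype.range_coe]
    _ ≤ finrank K S.dualAnnihilator := hann.fintype_card_le_finrank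
    _ = finrank K ((U →ₗ[K] V) ⧸ S) := finrank_dualAnnihilator_eq_finrank_quotient S

-- `H` consists of the functionals whose restriction to `ker G` is exceptional for
-- `S ∩ L(U, ker G)`.
theorem exists_submodule_surjective_postcomp_prod [FiniteDimensional K W]
    {S : Submodule K (U →ₗ[K] V)} {G : V →ₗ[K] W} (hG : Surjective (postcomp S G)) :
    ∃ H : Submodule K (Dual K V),
      finrank K H ≤ finrank K ((U →ₗ[K] V) ⧸ S) + finrank K W ∧
      ∀ f ∉ H, Surjective (postcomp S (f.prod G)) := by
  let j : (U →ₗ[K] G.ker) →ₗ[K] (U →ₗ[K] V) := G.ker.subtype.compRight K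
  refine ⟨(exceptionalDual (S.comap j)).comap G.ker.dualRestrict, ?_, fun f hf β => ?_⟩
  · have hH := finrank_comap_le_add_finrank_ker G.ker.dualRestrict (exceptionalDual (S.comap j))
    have hexc := (finrank_exceptionalDual_le (S.comap j)).trans (finrank_quotient_comap_le j S)
    have hker : finrank K G.ker.dualRestrict.ker ≤ finrank K W := by
      rw [Submodule.dualRestrict_ker_eq_dualAnnihilator,
        finrank_dualAnnihilator_eq_finrank_quotient, G.quotKerEquivRange.finrank_eq]
      exact Submodule.finrank_le _
    omega
  · obtain ⟨s, hs⟩ := hG (LinearMap.snd K K W ∘ₗ β)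
    obtain ⟨t, ht⟩ := surjective_postcomp_of_notMem_exceptionalDual hf
      (LinearMap.fst K K W ∘ₗ β - f ∘ₗ (s : U →ₗ[K] V))
    refine ⟨s + ⟨j t, t.2⟩, LinearMap.ext fun u => Prod.ext ?_ ?_⟩
    · change f (s.1 u + t.1 u) = (β u).1
      rw [map_add]
      exact add_eq_of_eq_sub' (LinearMap.congr_fun ht u)
    · change G (s.1 u + t.1 u) = (β u).2
      rw [map_add, LinearMap.mem_ker.mp (t.1 u).2, add_zero]
      exact LinearMap.congr_fun hs u

end ExceptionalFunctionals

section LocalMaps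

variable {S : Submodule K (U →ₗ[K] V)} {F : S →+ V} {D : Submodule K V}

/-- `F` is evaluation at some vector of `U`. -/
def IsLocal (F : S →+ V) : Prop :=
  ∃ y : U, ∀ s : S, F s = (s : U →ₗ[K] V) y

/-- `F s` lies in the range of `s` for every `s` whose range does not contain `D`. Here `D` may be
any subspace, not only a line. -/
def IsQuasiRangeCompatible (D : Submodule K V) (F : S →+ V) : Prop :=
  ∀ s : S, ¬ D ≤ LinearMap.range (s : U →ₗ[K] V) → F s ∈ LinearMap.range (s : U →ₗ[K] V)

/-- The additive form `Φ` on `U*` computes `f ∘ F` from `f ∘ s`. -/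
def Represents (F : S →+ V) (f : Dual K V) (Φ : Dual K U →+ K) : Prop :=
  ∀ s : S, f (F s) = Φ (f ∘ₗ (s : U →ₗ[K] V))

theorem IsQuasiRangeCompatible.apply_eq_zero (hF : IsQuasiRangeCompatible D F) {d : V}
    (hd : d ∈ D) {f : Dual K V} (hfd : f d ≠ 0) {s : S} (hs : f ∘ₗ (s : U →ₗ[K] V) = 0) :
    f (F s) = 0 := by
  have hrange : LinearMap.range (s : U →ₗ[K] V) ≤ f.ker := LinearMap.range_le_ker_iff.mpr hs
  exact hrange (hF s fun hD => hfd (hrange (hD hd)))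

theorem exists_represents {f : Dual K V} (hf : Surjective (postcomp S f))
    (hF : ∀ s : S, f ∘ₗ (s : U →ₗ[K] V) = 0 → f (F s) = 0) : ∃ Φ, Represents F f Φ :=
  exists_addMonoidHom_apply_eq_of_ker_le (p := (postcomp S f).toAddMonoidHom)
    (g := f.toAddMonoidHom.comp F) hf hF

variable {d : V} {f g : Dual K V} {Φ Ψ : Dual K U →+ K}

theorem Represents.eq_and_map_smul (hK : Nat.card K ≠ 2) (hF : IsQuasiRangeCompatible D F)
    (hd : d ∈ D) (hfd : f d = 1) (hgd : g d = 1) (hfg : Surjective (postcomp S (f.prod g)))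
    (hΨ : Represents F f Ψ) (hΦ : Represents F g Φ) :
    Ψ = Φ ∧ ∀ (c : K) α, Φ (c • α) = c • Φ α := by
  refine eq_and_map_smul_of_map_smul_eq_smul hK fun a ha α => ?_
  obtain ⟨s, hs⟩ := hfg (α.prod (-(a • α)))
  have hfs : f ∘ₗ (s : U →ₗ[K] V) = α := congrArg (LinearMap.fst K K K ∘ₗ ·) hs
  have hgs : g ∘ₗ (s : U →ₗ[K] V) = -(a • α) := congrArg (LinearMap.snd K K K ∘ₗ ·) hs
  have hzero : (a • f + g) (F s) = 0 := by
    refine hF.apply_eq_zero hd ?_ ?_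
    · simpa [hfd, hgd, ← eq_neg_iff_add_eq_zero] using ha
    · rw [LinearMap.add_comp, LinearMap.smul_comp, hfs, hgs, add_neg_cancel]
  rw [LinearMap.add_apply, LinearMap.smul_apply, hΨ s, hΦ s, hfs, hgs, map_neg] at hzero
  exact (add_neg_eq_zero.mp hzero).symm

variable [FiniteDimensional K U] [FiniteDimensional K V]

-- A third functional `w` with `w d ≠ 0` lets one test against `w` and `f - g + w`, neither of
-- which vanishes at `d`.
theorem Represents.eq_of_finrank_quotient_add_three_le
    (hdim : finrank K ((U →ₗ[K] V) ⧸ S) + 3 ≤ finrank K V) (hF : IsQuasiRangeCompatible D F)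
    (hd : d ∈ D) (hfd : f d = 1) (hgd : g d = 1) (hfg : Surjective (postcomp S (f.prod g)))
    (hΨ : Represents F f Ψ) (hΦ : Represents F g Φ) : Ψ = Φ := by
  obtain ⟨H, hH, hHsurj⟩ := exists_submodule_surjective_postcomp_prod hfg
  obtain ⟨w, hwH, hwd⟩ : ∃ w, w ∉ H ∧ w d ≠ 0 := by
    refine exists_notMem_and_notMem (B := (Dual.eval K V d).ker) ?_ (ker_dualEval_ne_top ?_)
    · rintro rfl
      rw [finrank_top, Subspace.dual_finrank_eq, finrank_prod, finrank_self] at hH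
      omega
    · rintro rfl
      simp at hfd
  ext α
  obtain ⟨s, hs⟩ := hHsurj w hwH ((0 : Dual K U).prod (α.prod α))
  have hws : w ∘ₗ (s : U →ₗ[K] V) = 0 := congrArg (LinearMap.fst K K (K × K) ∘ₗ ·) hs
  have hfgs : (f.prod g) ∘ₗ (s : U →ₗ[K] V) = α.prod α :=
    congrArg (LinearMap.snd K K (K × K) ∘ₗ ·) hs
  have hfs : f ∘ₗ (s : U →ₗ[K] V) = α := congrArg (LinearMap.fst K K K ∘ₗ ·) hfgs
  have hgs : g ∘ₗ (s : U →ₗ[K] V) = α := congrArg (LinearMap.snd K K K ∘ₗ ·) hfgs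
  have hw : w (F s) = 0 := hF.apply_eq_zero hd hwd hws
  have hzero : (f - g + w) (F s) = 0 := by
    refine hF.apply_eq_zero hd (by simpa [hfd, hgd]) ?_
    rw [LinearMap.add_comp, LinearMap.sub_comp, hfs, hgs, hws, sub_self, add_zero]
  rwa [LinearMap.add_apply, LinearMap.sub_apply, hw, hΨ s, hΦ s, hfs, hgs, add_zero,
    sub_eq_zero] at hzero

theorem exists_dual_dual_represents
    (h1 : finrank K ((U →ₗ[K] V) ⧸ S) + 2 ≤ finrank K V)
    (h2 : Nat.card K = 2 → finrank K ((U →ₗ[K] V) ⧸ S) + 3 ≤ finrank K V)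
    (hF : IsQuasiRangeCompatible D F) (hd : d ∈ D) (hd0 : d ≠ 0) :
    ∃ (Φ : Dual K (Dual K U)) (H : Submodule K (Dual K V)),
      finrank K H ≤ finrank K ((U →ₗ[K] V) ⧸ S) + 1 ∧
      ∀ f ∉ H, f d = 1 → Represents F f Φ.toAddMonoidHom := by
  have exists_apply_eq_one (H : Submodule K (Dual K V))
      (hH : finrank K H ≤ finrank K ((U →ₗ[K] V) ⧸ S) + 1) : ∃ f, f ∉ H ∧ f d = 1 := by
    obtain ⟨f, hf, hfd, -⟩ := exists_dual_notMem_and_apply_ne_zero (H := H) (by omega)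
      (fun hK => by have := h2 hK; omega) hd0 hd0
    obtain ⟨c, -, hc⟩ := exists_smul_notMem_and_apply_eq_one hf hfd
    exact ⟨c • f, hc⟩
  have exists_represents_of_surjective {f : Dual K V} (hfd : f d = 1)
      (hf : Surjective (postcomp S f)) : ∃ Φ, Represents F f Φ :=
    exists_represents hf fun _ => hF.apply_eq_zero hd (by simp [hfd])
  obtain ⟨g, hgS, hgd⟩ := exists_apply_eq_one (exceptionalDual S)
    ((finrank_exceptionalDual_le S).trans (Nat.le_succ _))
  have hgsurj := surjective_postcomp_of_notMem_exceptionalDual hgS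
  obtain ⟨Φ, hΦ⟩ := exists_represents_of_surjective hgd hgsurj
  obtain ⟨H, hH, hHsurj⟩ := exists_submodule_surjective_postcomp_prod hgsurj
  rw [finrank_self] at hH
  have compare (f : Dual K V) (hf : f ∉ H) (hfd : f d = 1) :
      Represents F f Φ ∧ ∀ (c : K) α, Φ (c • α) = c • Φ α := by
    have hfg := hHsurj f hf
    have hfsurj : Surjective (postcomp S f) := fun α =>
      (hfg (α.prod 0)).imp fun s hs => congrArg (LinearMap.fst K K K ∘ₗ ·) hs
    obtain ⟨Ψ, hΨ⟩ := exists_represents_of_surjective hfd hfsurj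
    by_cases hK : Nat.card K = 2
    · obtain rfl := hΨ.eq_of_finrank_quotient_add_three_le (h2 hK) hF hd hfd hgd hfg hΦ
      exact ⟨hΨ, map_smul_of_natCard_eq_two hK Ψ⟩
    · obtain ⟨rfl, hsmul⟩ := hΨ.eq_and_map_smul hK hF hd hfd hgd hfg hΦ
      exact ⟨hΨ, hsmul⟩
  obtain ⟨f₀, hf₀, hf₀d⟩ := exists_apply_eq_one H hH
  exact ⟨{ Φ with map_smul' := (compare f₀ hf₀ hf₀d).2 }, H, hH,
    fun f hf hfd => (compare f hf hfd).1⟩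

theorem IsQuasiRangeCompatible.isLocal
    (h1 : finrank K ((U →ₗ[K] V) ⧸ S) + 2 ≤ finrank K V)
    (h2 : Nat.card K = 2 → finrank K ((U →ₗ[K] V) ⧸ S) + 3 ≤ finrank K V)
    (hF : IsQuasiRangeCompatible D F) (hD : D ≠ ⊥) : IsLocal F := by
  obtain ⟨d, hd, hd0⟩ := Submodule.exists_mem_ne_zero_of_ne_bot hD
  obtain ⟨Φ, H, hH, hrep⟩ := exists_dual_dual_represents h1 h2 hF hd hd0
  obtain ⟨y, rfl⟩ := (Module.evalEquiv K U).surjective Φ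
  refine ⟨y, fun s => sub_eq_zero.mp ?_⟩
  by_contra hne
  obtain ⟨f, hf, hfd, hfs⟩ := exists_dual_notMem_and_apply_ne_zero (H := H) (by omega)
    (fun hK => by have := h2 hK; omega) hd0 hne
  obtain ⟨c, hc, hcf, hcfd⟩ := exists_smul_notMem_and_apply_eq_one hf hfd
  have hcfs : (c • f) (F s) = (c • f) ((s : U →ₗ[K] V) y) := hrep (c • f) hcf hcfd s
  refine mul_ne_zero hc hfs ?_
  rw [← smul_eq_mul, ← LinearMap.smul_apply, map_sub, hcfs, sub_self]

end LocalMaps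

section ModVector

variable (S : Submodule K (U →ₗ[K] V)) (x : U)

/-- The space `Sx = {s x : s ∈ S}`. -/
abbrev evalImage : Submodule K V :=
  S.map (LinearMap.applyₗ x)

/-- The maps of `S` that vanish at `x`, as an operator space on `U ⧸ K x`. -/
def modVector : Submodule K ((U ⧸ K ∙ x) →ₗ[K] V) :=
  S.comap (LinearMap.lcomp K V (K ∙ x).mkQ)

/-- The embedding of `modVector S x` into `S`. -/
def modVectorInclusion : modVector S x →ₗ[K] S :=
  (LinearMap.lcomp K V (K ∙ x).mkQ).submoduleComap S

variable {S x}

theorem modVectorInclusion_coe (t : modVector S x) :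
    (modVectorInclusion S x t : U →ₗ[K] V) = (t : (U ⧸ K ∙ x) →ₗ[K] V) ∘ₗ (K ∙ x).mkQ := rfl

theorem modVectorInclusion_injective : Injective (modVectorInclusion S x) := by
  intro t t' h
  exact Subtype.ext (LinearMap.cancel_right (K ∙ x).mkQ_surjective |>.mp (congrArg Subtype.val h))

theorem range_modVectorInclusion :
    (modVectorInclusion S x).range = ((LinearMap.applyₗ x).domRestrict S).ker := by
  ext s
  constructor
  · rintro ⟨t, rfl⟩
    change (t : (U ⧸ K ∙ x) →ₗ[K] V) ((K ∙ x).mkQ x) = 0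
    rw [Submodule.mkQ_apply,
      (Submodule.Quotient.mk_eq_zero _).mpr (Submodule.mem_span_singleton_self x), map_zero]
  · intro hs
    have hle : K ∙ x ≤ LinearMap.ker (s : U →ₗ[K] V) :=
      (Submodule.span_singleton_le_iff_mem _ _).mpr hs
    have hlift := (K ∙ x).liftQ_mkQ (s : U →ₗ[K] V) hle
    have hmem : (K ∙ x).liftQ s hle ∈ modVector S x := by
      rw [modVector, Submodule.mem_comap, LinearMap.lcomp_apply', hlift]
      exact s.2
    exact ⟨⟨_, hmem⟩, Subtype.ext hlift⟩

theorem modVectorInclusion_apply_self (t : modVector S x) :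
    (modVectorInclusion S x t : U →ₗ[K] V) x = 0 :=
  (range_modVectorInclusion (S := S) (x := x)).le (LinearMap.mem_range_self _ t)

theorem finrank_quotient_modVector_add [FiniteDimensional K U] [FiniteDimensional K V]
    (hx : x ≠ 0) :
    finrank K (((U ⧸ K ∙ x) →ₗ[K] V) ⧸ modVector S x) + finrank K V =
      finrank K ((U →ₗ[K] V) ⧸ S) + finrank K (evalImage S x) := by
  have hS : finrank K (evalImage S x) + finrank K (modVector S x) = finrank K S := by
    rw [← ((LinearMap.applyₗ x).domRestrict S).finrank_range_add_finrank_ker,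
      LinearMap.range_domRestrict, ← range_modVectorInclusion,
      LinearMap.finrank_range_of_inj modVectorInclusion_injective]
  have hUV : finrank K (U →ₗ[K] V) = finrank K ((U ⧸ K ∙ x) →ₗ[K] V) + finrank K V := by
    rw [finrank_linearMap, finrank_linearMap, ← (K ∙ x).finrank_quotient_add_finrank,
      finrank_span_singleton hx, add_mul, one_mul]
  have hquot := S.finrank_quotient_add_finrank
  have hquot' := (modVector S x).finrank_quotient_add_finrank
  omega

variable {F : S →+ V} {D : Submodule K V}

theorem IsQuasiRangeCompatible.comp_modVectorInclusion (hF : IsQuasiRangeCompatible D F) :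
    IsQuasiRangeCompatible D (F.comp (modVectorInclusion S x).toAddMonoidHom) := by
  intro t ht
  have hrange : LinearMap.range (modVectorInclusion S x t : U →ₗ[K] V) =
      LinearMap.range (t : (U ⧸ K ∙ x) →ₗ[K] V) := by
    rw [modVectorInclusion_coe, LinearMap.range_comp_of_range_eq_top _ (K ∙ x).range_mkQ]
  rw [← hrange] at ht ⊢
  exact hF _ ht

theorem exists_addMonoidHom_apply_eq_of_vanishing {G : S →+ V}
    (hG : ∀ s : S, (s : U →ₗ[K] V) x = 0 → G s = 0) :
    ∃ φ : V →+ V, ∀ s : S, G s = φ ((s : U →ₗ[K] V) x) := by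
  let ev := (LinearMap.applyₗ (R := K) (M₂ := V) x).domRestrict S
  obtain ⟨φ, hφ⟩ := exists_addMonoidHom_apply_eq_of_ker_le
    (p := ev.rangeRestrict.toAddMonoidHom) ev.surjective_rangeRestrict (g := G)
    fun s hs => hG s (congrArg Subtype.val hs)
  obtain ⟨π, hπ⟩ := ev.range.subtype.exists_leftInverse_of_injective ev.range.ker_subtype
  refine ⟨φ.comp π.toAddMonoidHom, fun s => (hφ s).trans (congrArg φ ?_)⟩
  exact (LinearMap.congr_fun hπ (ev.rangeRestrict s)).symm

theorem exists_eq_apply_add_addMonoidHom_apply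
    (hF : IsLocal (F.comp (modVectorInclusion S x).toAddMonoidHom)) :
    ∃ (x' : U) (φ : V →+ V), ∀ s : S, F s = (s : U →ₗ[K] V) x' + φ ((s : U →ₗ[K] V) x) := by
  obtain ⟨z, hz⟩ := hF
  obtain ⟨x', rfl⟩ := (K ∙ x).mkQ_surjective z
  let ev : S →+ V := ((LinearMap.applyₗ x').domRestrict S).toAddMonoidHom
  obtain ⟨φ, hφ⟩ := exists_addMonoidHom_apply_eq_of_vanishing (x := x) (G := F - ev) fun s hs => by
    obtain ⟨t, rfl⟩ := range_modVectorInclusion.ge hs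
    exact sub_eq_zero.mpr (hz t)
  exact ⟨x', φ, fun s => sub_eq_iff_eq_add'.mp (hφ s)⟩

theorem exists_comp_eq_zero_and_apply_eq {f : Dual K V} (hfx : f ∈ (evalImage S x).dualAnnihilator)
    (hf : Surjective (postcomp (modVector S x) f)) {y : V} (hy : y ∈ evalImage S x) :
    ∃ s : S, f ∘ₗ (s : U →ₗ[K] V) = 0 ∧ (s : U →ₗ[K] V) x = y := by
  obtain ⟨s, hs, rfl⟩ := hy
  have hle : K ∙ x ≤ (f ∘ₗ s).ker := (Submodule.span_singleton_le_iff_mem _ _).mpr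
    ((Submodule.mem_dualAnnihilator f).mp hfx _ ⟨s, hs, rfl⟩)
  obtain ⟨t, ht⟩ := hf ((K ∙ x).liftQ (f ∘ₗ s) hle)
  rw [postcomp_apply] at ht
  refine ⟨⟨s, hs⟩ - modVectorInclusion S x t, ?_, ?_⟩
  · rw [Submodule.coe_sub, LinearMap.comp_sub, sub_eq_zero, modVectorInclusion_coe,
      ← LinearMap.comp_assoc, ht, Submodule.liftQ_mkQ]
  · rw [Submodule.coe_sub, LinearMap.sub_apply, modVectorInclusion_apply_self, sub_zero]
    rfl

theorem map_mem_evalImage [FiniteDimensional K U] [FiniteDimensional K V]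
    (h1 : finrank K (((U ⧸ K ∙ x) →ₗ[K] V) ⧸ modVector S x) + finrank K (evalImage S x) + 1 ≤
      finrank K V)
    (h2 : Nat.card K = 2 →
      finrank K (((U ⧸ K ∙ x) →ₗ[K] V) ⧸ modVector S x) + finrank K (evalImage S x) + 2 ≤
        finrank K V)
    (hF : IsQuasiRangeCompatible D F) (hD : ¬ D ≤ evalImage S x) {x' : U} {φ : V → V}
    (hφ : ∀ s : S, F s = (s : U →ₗ[K] V) x' + φ ((s : U →ₗ[K] V) x)) {y : V}
    (hy : y ∈ evalImage S x) : φ y ∈ evalImage S x := by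
  by_contra hφy
  obtain ⟨d, hd, hdx⟩ := SetLike.not_le_iff_exists.mp hD
  let π := (evalImage S x).mkQ
  have hH : finrank K ((exceptionalDual (modVector S x)).comap π.dualMap) ≤
      finrank K (((U ⧸ K ∙ x) →ₗ[K] V) ⧸ modVector S x) := by
    have hker : π.dualMap.ker = ⊥ := LinearMap.ker_eq_bot.mpr <|
      LinearMap.dualMap_injective_of_surjective (evalImage S x).mkQ_surjective
    have hle := finrank_comap_le_add_finrank_ker π.dualMap (exceptionalDual (modVector S x))
    rw [hker, finrank_bot] at hle
    exact hle.trans (finrank_exceptionalDual_le _)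
  have hquot := (evalImage S x).finrank_quotient_add_finrank
  obtain ⟨h, hh, hhd, hhφ⟩ := exists_dual_notMem_and_apply_ne_zero
    (H := (exceptionalDual (modVector S x)).comap π.dualMap) (by omega)
    (fun hK => by have := h2 hK; omega)
    (mt (Submodule.Quotient.mk_eq_zero _).mp hdx) (mt (Submodule.Quotient.mk_eq_zero _).mp hφy)
  have hann : h ∘ₗ π ∈ (evalImage S x).dualAnnihilator :=
    (Submodule.mem_dualAnnihilator _).mpr fun v hv => by
      rw [LinearMap.comp_apply, Submodule.mkQ_apply, (Submodule.Quotient.mk_eq_zero _).mpr hv,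
        map_zero]
  obtain ⟨s, hs, rfl⟩ := exists_comp_eq_zero_and_apply_eq hann
    (surjective_postcomp_of_notMem_exceptionalDual hh) hy
  have hzero := hF.apply_eq_zero hd (f := h ∘ₗ π) hhd hs
  rw [hφ s, map_add, show (h ∘ₗ π) ((s : U →ₗ[K] V) x') = 0 from LinearMap.congr_fun hs x',
    zero_add] at hzero
  exact hhφ hzero

theorem isLocal_of_map_smul (hx : finrank K (evalImage S x) = 1) {x' : U} {φ : V →+ V}
    (hφ : ∀ s : S, F s = (s : U →ₗ[K] V) x' + φ ((s : U →ₗ[K] V) x))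
    (hmem : ∀ y ∈ evalImage S x, φ y ∈ evalImage S x)
    (hsmul : ∀ (c : K), ∀ y ∈ evalImage S x, φ (c • y) = c • φ y) : IsLocal F := by
  let φ' : evalImage S x →ₗ[K] evalImage S x :=
    { toFun := fun y => ⟨φ y, hmem y y.2⟩
      map_add' := fun y z => Subtype.ext (map_add φ _ _)
      map_smul' := fun c y => Subtype.ext (hsmul c y y.2) }
  obtain ⟨m, hm, -⟩ := LinearMap.existsUnique_eq_smul_id_of_finrank_eq_one hx φ'
  refine ⟨x' + m • x, fun s => ?_⟩
  have hmx : φ ((s : U →ₗ[K] V) x) = m • (s : U →ₗ[K] V) x :=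
    congrArg Subtype.val (LinearMap.congr_fun hm ⟨_, s, s.2, rfl⟩)
  rw [hφ s, hmx, map_add, map_smul]

end ModVector

end OperatorSpaces

/-- Let `S` be a linear subspace of `L(U,V)` with `codim S ≤ 2 dim V − 3`
(and `≤ 2 dim V − 4` if `#K = 2`), let `x ∈ U` satisfy `dim Sx = 1` (where
`Sx = {s x : s ∈ S}` is `Submodule.map (LinearMap.applyₗ x) S`), and let `F : S → V` be a
non-local additive homomorphism that is quasi-range-compatible with respect to a
1-dimensional subspace `D` of `V`. Then either
(a) `F` is the sum of a local map and `s ↦ φ (s x)` where `φ` is an additive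
endomorphism of `Sx` (encoded as an additive map `V →+ V` preserving `Sx`) that is not
`K`-linear on `Sx`, or
(b) `D = Sx` and `F` is the sum of a local map and `s ↦ φ (s x)` for some additive
homomorphism `φ` (whose values on `Sx = D` are all that matters). -/
theorem quasi_range_compatible_hom_special_type_one
    (K U V : Type*) [Field K]
    [AddCommGroup U] [Module K U] [FiniteDimensional K U]
    [AddCommGroup V] [Module K V] [FiniteDimensional K V]
    (S : Submodule K (U →ₗ[K] V))
    (h1 : Module.finrank K (U →ₗ[K] V) + 3 ≤
      Module.finrank K S + 2 * Module.finrank K V)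
    (h2 : Nat.card K = 2 → Module.finrank K (U →ₗ[K] V) + 4 ≤
      Module.finrank K S + 2 * Module.finrank K V)
    (x : U)
    (hx : Module.finrank K (Submodule.map (LinearMap.applyₗ x) S) = 1)
    (F : ↥S →+ V)
    (hnl : ¬ ∃ y : U, ∀ s : ↥S, F s = (s : U →ₗ[K] V) y)
    (D : Submodule K V) (hD : Module.finrank K D = 1)
    (hq : ∀ s : ↥S, ¬ D ≤ LinearMap.range (s : U →ₗ[K] V) →
      F s ∈ LinearMap.range (s : U →ₗ[K] V)) :
    (∃ (x' : U) (φ : V →+ V),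
      (∀ y ∈ Submodule.map (LinearMap.applyₗ x) S,
        φ y ∈ Submodule.map (LinearMap.applyₗ x) S) ∧
      (¬ ∀ (c : K), ∀ y ∈ Submodule.map (LinearMap.applyₗ x) S,
        φ (c • y) = c • φ y) ∧
      (∀ s : ↥S, F s = (s : U →ₗ[K] V) x' + φ ((s : U →ₗ[K] V) x))) ∨
    (D = Submodule.map (LinearMap.applyₗ x) S ∧
      ∃ (x' : U) (φ : V →+ V),
        ∀ s : ↥S, F s = (s : U →ₗ[K] V) x' + φ ((s : U →ₗ[K] V) x)) := by
  have hx0 : x ≠ 0 := by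
    rintro rfl
    rw [map_zero, Submodule.map_zero, finrank_bot] at hx
    exact zero_ne_one hx
  have hcodim := finrank_quotient_modVector_add (S := S) hx0
  have hquot := S.finrank_quotient_add_finrank
  have hSx : finrank K (evalImage S x) = 1 := hx
  have hD0 : D ≠ ⊥ := Submodule.one_le_finrank_iff.mp hD.ge
  have hF : IsQuasiRangeCompatible D F := hq
  have hlocal := (hF.comp_modVectorInclusion (x := x)).isLocal (by omega)
    (fun hK => by have := h2 hK; omega) hD0
  obtain ⟨x', φ, hφ⟩ := exists_eq_apply_add_addMonoidHom_apply hlocal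
  by_cases hDx : D = evalImage S x
  · exact Or.inr ⟨hDx, x', φ, hφ⟩
  · have hDle : ¬ D ≤ evalImage S x := fun hle =>
      hDx (Submodule.eq_of_le_of_finrank_eq hle (hD.trans hx.symm))
    have hmem : ∀ y ∈ evalImage S x, φ y ∈ evalImage S x := fun y =>
      map_mem_evalImage (by omega) (fun hK => by have := h2 hK; omega) hF hDle hφ
    exact Or.inl ⟨x', φ, hmem, fun hsmul => hnl (isLocal_of_map_smul hx hφ hmem hsmul), hφ⟩
end

section
/- Let U and V be finite-dimensional vector spaces over a field K with more than 3 elements, with dim V = 2, and let S be a linear subspace of L(U,V) with codim S ≤ 2·dim V − 3. Then either S has special type 1, or every quasi-range-compatible K-linear map F : S → V is local. -/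
/-!
Identify the dual of `L(U, V)` with `L(V, U)` through the trace pairing, so that a subspace `S` of
codimension at most one is `{s | tr (s ∘ θ) = 0}` for some `θ : V → U`. When `θ = f ⊗ x` has rank
one, `Sx = ker f` is a line. Otherwise `θ` is zero or injective. Pick a basis `b` of `V` with
`b 1 ∈ D`. Testing quasi-range-compatibility on the rank-one maps `φ ⊗ w` of `S`, where
`w = b 0 + t b 1`, shows that a quadratic polynomial in `t` with values in `U` is for every `t` a
multiple of `θ w`. Because `K` has more than three elements, the multiplier is affine in `t`, and
comparing coefficients says that each coordinate of `F` differs from that of an evaluation by a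
multiple of `tr (s ∘ θ)`, which vanishes on `S`.
-/

open LinearMap Module Submodule

section PolynomialIdentities

variable {K M : Type*} [Field K] [AddCommGroup M] [Module K M]

theorem eq_zero_of_forall_sum_pow_smul_eq_zero {n : ℕ} (hn : (n : Cardinal) < Cardinal.mk K)
    (m : Fin (n + 1) → M) (hm : ∀ t : K, ∑ i : Fin (n + 1), t ^ (i : ℕ) • m i = 0) : m = 0 := by
  funext i
  refine (forall_dual_apply_eq_zero_iff K (m i)).1 fun φ ↦ ?_
  let p : Polynomial K := ∑ j : Fin (n + 1), Polynomial.C (φ (m j)) * Polynomial.X ^ (j : ℕ)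
  have hp_eval (t : K) : p.eval t = 0 := by
    calc p.eval t = φ (∑ j : Fin (n + 1), t ^ (j : ℕ) • m j) := by
          simp [p, Polynomial.eval_finsetSum, mul_comm (t ^ _)]
      _ = 0 := by rw [hm, map_zero]
  have hp_natDegree : p.natDegree ≤ n :=
    Polynomial.natDegree_sum_le_of_forall_le _ _ fun j _ ↦
      (Polynomial.natDegree_C_mul_X_pow_le _ _).trans (Nat.le_of_lt_succ j.2)
  have hp : p = 0 :=
    Polynomial.eq_zero_of_forall_eval_zero_of_natDegree_lt_card p hp_eval
      ((Nat.cast_le.2 hp_natDegree).trans_lt hn)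
  simpa [p, Polynomial.finsetSum_coeff, Polynomial.coeff_X_pow, Fin.val_inj] using
    congrArg (fun q ↦ Polynomial.coeff q i) hp

theorem exists_dual_eq_one_and_eq_zero_of_linearIndependent {u v : M}
    (huv : LinearIndependent K ![u, v]) : ∃ φ : Dual K M, φ u = 1 ∧ φ v = 0 := by
  have hu : u ∉ span K {v} := by
    rw [mem_span_singleton, not_exists]
    exact (LinearIndependent.pair_iff' (huv.ne_zero 1)).1 (LinearIndependent.pair_symm_iff.1 huv)
  obtain ⟨φ, hφu, hφv⟩ := exists_le_ker_of_notMem hu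
  refine ⟨(φ u)⁻¹ • φ, by simp [hφu], ?_⟩
  have : φ v = 0 := hφv (mem_span_singleton_self v)
  simp [this]

theorem exists_affine_factor_of_forall_quadratic_mem_span (hK : 3 < Cardinal.mk K)
    {u v c₀ c₁ c₂ : M} (huv : LinearIndependent K ![u, v])
    (h : ∀ t : K, c₀ + t • c₁ + t ^ 2 • c₂ ∈ span K {u + t • v}) :
    ∃ α β : K, c₀ = α • u ∧ c₁ = β • u + α • v ∧ c₂ = β • v := by
  obtain ⟨φ, hφu, hφv⟩ := exists_dual_eq_one_and_eq_zero_of_linearIndependent huv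
  -- `φ` reads off the multiplier, which is therefore polynomial in `t`.
  have hfactor (t : K) :
      c₀ + t • c₁ + t ^ 2 • c₂ = φ (c₀ + t • c₁ + t ^ 2 • c₂) • (u + t • v) := by
    obtain ⟨k, hk⟩ := mem_span_singleton.1 (h t)
    simp [← hk, hφu, hφv]
  have hcoeff := eq_zero_of_forall_sum_pow_smul_eq_zero (n := 3) (mod_cast hK)
    ![c₀ - φ c₀ • u, c₁ - φ c₁ • u - φ c₀ • v, c₂ - φ c₂ • u - φ c₁ • v, -(φ c₂ • v)] fun t ↦ by
      rw [← sub_eq_zero.2 (hfactor t)]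
      simp only [Nat.reduceAdd, Fin.sum_univ_four, Fin.isValue, Matrix.cons_val,
        Fin.coe_ofNat_eq_mod, Nat.reduceMod, map_add, map_smul, smul_eq_mul]
      module
  have h₀ : c₀ - φ c₀ • u = 0 := congrFun hcoeff 0
  have h₁ : c₁ - φ c₁ • u - φ c₀ • v = 0 := congrFun hcoeff 1
  have h₂ : c₂ - φ c₂ • u - φ c₁ • v = 0 := congrFun hcoeff 2
  have h₃ : φ c₂ • v = 0 := neg_eq_zero.1 (congrFun hcoeff 3)
  have hφc₂ : φ c₂ = 0 := (smul_eq_zero.1 h₃).resolve_right (huv.ne_zero 1)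
  refine ⟨φ c₀, φ c₁, sub_eq_zero.1 h₀, ?_, ?_⟩
  · rw [sub_sub] at h₁
    exact sub_eq_zero.1 h₁
  · simpa [hφc₂, sub_eq_zero] using h₂

end PolynomialIdentities

section Subspaces

variable {K M : Type*} [Field K] [AddCommGroup M] [Module K M]

theorem exists_eq_ker_of_finrank_le_add_one [FiniteDimensional K M] (S : Submodule K M)
    (hS : finrank K M ≤ finrank K S + 1) : ∃ ψ : Dual K M, S = ker ψ := by
  obtain rfl | hlt := eq_top_or_lt_top S
  · exact ⟨0, ker_zero.symm⟩
  obtain ⟨ψ, hψ, hle⟩ := S.exists_le_ker_of_lt_top hlt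
  have hker := Dual.finrank_ker_add_one_of_ne_zero hψ
  exact ⟨ψ, eq_of_le_of_finrank_le hle (by omega)⟩

theorem exists_basis_fin_two_adapted (hM : finrank K M = 2) {D : Submodule K M}
    (hD : finrank K D = 1) : ∃ b : Basis (Fin 2) K M, b 0 ∉ D ∧ b 1 ∈ D := by
  have hbot : D ≠ ⊥ := by rintro rfl; simp at hD
  have htop : D ≠ ⊤ := by rintro rfl; simp [hM] at hD
  obtain ⟨d, hdD, hd⟩ := exists_mem_ne_zero_of_ne_bot hbot
  obtain ⟨w, -, hwD⟩ := SetLike.exists_of_lt htop.lt_top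
  have hwd : LinearIndependent K ![w, d] :=
    LinearIndependent.pair_symm_iff.1 <| (LinearIndependent.pair_iff' hd).2 fun k hk ↦
      hwD (hk ▸ D.smul_mem k hdD)
  exact ⟨basisOfLinearIndependentOfCardEqFinrank hwd (by simp [hM]), by simpa, by simpa⟩

end Subspaces

section LinearMaps

variable {K U V : Type*} [Field K] [AddCommGroup U] [Module K U] [AddCommGroup V] [Module K V]

section SmallRank

theorem exists_eq_smulRight_of_finrank_range_eq_one {θ : V →ₗ[K] U}
    (hθ : finrank K (range θ) = 1) :
    ∃ (f : Dual K V) (x : U), f ≠ 0 ∧ x ≠ 0 ∧ θ = f.smulRight x := by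
  obtain ⟨⟨x, _⟩, hx, hspan⟩ := finrank_eq_one_iff'.1 hθ
  have hx0 : x ≠ 0 := by simpa using hx
  obtain ⟨φ, hφ⟩ := Projective.exists_dual_eq_one K hx0
  have hθ_eq : θ = (φ ∘ₗ θ).smulRight x := by
    ext v
    obtain ⟨k, hk⟩ := hspan ⟨θ v, mem_range_self θ v⟩
    have hk : k • x = θ v := congrArg Subtype.val hk
    simp [← hk, hφ]
  refine ⟨φ ∘ₗ θ, x, fun h ↦ ?_, hx0, hθ_eq⟩
  rw [hθ_eq, h, zero_smulRight, range_zero, finrank_bot] at hθ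
  exact zero_ne_one hθ

theorem eq_zero_or_injective_of_finrank_range_ne_one (hV : finrank K V = 2) {θ : V →ₗ[K] U}
    (hθ : finrank K (range θ) ≠ 1) : θ = 0 ∨ Function.Injective θ := by
  have : FiniteDimensional K V := .of_finrank_pos (by omega)
  have hrank := finrank_range_add_finrank_ker θ
  obtain hrange | hker : finrank K (range θ) = 0 ∨ finrank K (ker θ) = 0 := by omega
  · exact .inl (range_eq_bot.1 (finrank_eq_zero.1 hrange))
  · exact .inr (ker_eq_bot.1 (finrank_eq_zero.1 hker))

theorem exists_affine_factor_of_eq_zero_or_injective (hK : 3 < Cardinal.mk K)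
    (b : Basis (Fin 2) K V) {θ : V →ₗ[K] U} (hθ : θ = 0 ∨ Function.Injective θ) {c₀ c₁ c₂ : U}
    (h : ∀ t : K, c₀ + t • c₁ + t ^ 2 • c₂ ∈ span K {θ (b 0 + t • b 1)}) :
    ∃ α β : K, c₀ = α • θ (b 0) ∧ c₁ = β • θ (b 0) + α • θ (b 1) ∧ c₂ = β • θ (b 1) := by
  obtain rfl | hinj := hθ
  · have hK₂ : ((2 : ℕ) : Cardinal) < Cardinal.mk K := lt_trans (by norm_num) hK
    have hcoeff := eq_zero_of_forall_sum_pow_smul_eq_zero hK₂ ![c₀, c₁, c₂] fun t ↦ by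
      simpa [Fin.sum_univ_three] using h t
    exact ⟨0, 0, by simpa using congrFun hcoeff 0, by simpa using congrFun hcoeff 1,
      by simpa using congrFun hcoeff 2⟩
  · refine exists_affine_factor_of_forall_quadratic_mem_span hK ?_ (by simpa using h)
    have hpair : ![θ (b 0), θ (b 1)] = θ ∘ b := by
      ext i
      fin_cases i <;> rfl
    rw [hpair]
    exact b.linearIndependent.map' θ (ker_eq_bot.2 hinj)

end SmallRank

section TracePairing

/-- The trace pairing between `L(V, U)` and `L(U, V)`, sending `θ` to the functional
`s ↦ tr (s ∘ θ)`. For finite-dimensional spaces it identifies functionals on `L(U, V)` with linear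
maps `V → U`; `LinearMap.trace`, hence the pairing, is zero when `V` is infinite-dimensional. -/
noncomputable def tracePairing : (V →ₗ[K] U) →ₗ[K] Dual K (U →ₗ[K] V) :=
  (llcomp K V U V).flip.compr₂ (trace K V)

variable [FiniteDimensional K V]

theorem tracePairing_apply_smulRight (θ : V →ₗ[K] U) (φ : Dual K U) (w : V) :
    tracePairing θ (φ.smulRight w) = φ (θ w) :=
  trace_smulRight (φ ∘ₗ θ) w

theorem tracePairing_smulRight_apply (f : Dual K V) (x : U) (s : U →ₗ[K] V) :
    tracePairing (f.smulRight x) s = f (s x) := by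
  have : s ∘ₗ f.smulRight x = f.smulRight (s x) := by ext; simp
  change trace K V (s ∘ₗ f.smulRight x) = _
  rw [this, trace_smulRight]

theorem tracePairing_injective :
    Function.Injective (tracePairing : (V →ₗ[K] U) →ₗ[K] Dual K (U →ₗ[K] V)) := by
  refine (injective_iff_map_eq_zero _).2 fun θ hθ ↦ LinearMap.ext fun w ↦ ?_
  refine (forall_dual_apply_eq_zero_iff K (θ w)).1 fun φ ↦ ?_
  rw [← tracePairing_apply_smulRight, hθ, LinearMap.zero_apply]

theorem tracePairing_surjective [FiniteDimensional K U] :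
    Function.Surjective (tracePairing : (V →ₗ[K] U) →ₗ[K] Dual K (U →ₗ[K] V)) := by
  refine (injective_iff_surjective_of_finrank_eq_finrank ?_).1 tracePairing_injective
  rw [Subspace.dual_finrank_eq, finrank_linearMap, finrank_linearMap, mul_comm]

theorem exists_forall_eq_tracePairing [FiniteDimensional K U] {S : Submodule K (U →ₗ[K] V)}
    (ψ : Dual K S) : ∃ A : V →ₗ[K] U, ∀ s : S, ψ s = tracePairing A s := by
  obtain ⟨ψ', hψ'⟩ := exists_extend ψ
  obtain ⟨A, rfl⟩ := tracePairing_surjective ψ'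
  exact ⟨A, fun s ↦ (LinearMap.congr_fun hψ' s).symm⟩

theorem map_applyₗ_ker_tracePairing_smulRight (f : Dual K V) {x : U} (hx : x ≠ 0) :
    (ker (tracePairing (f.smulRight x))).map (applyₗ x) = ker f := by
  ext v
  simp only [mem_map, LinearMap.mem_ker, tracePairing_smulRight_apply, applyₗ_apply_apply]
  constructor
  · rintro ⟨s, hs, rfl⟩
    exact hs
  · intro hv
    obtain ⟨φ, hφ⟩ := Projective.exists_dual_eq_one K hx
    exact ⟨φ.smulRight v, by simp [hv], by simp [hφ]⟩

theorem exists_finrank_map_applyₗ_add_one_of_finrank_range_eq_one {θ : V →ₗ[K] U}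
    (hθ : finrank K (range θ) = 1) :
    ∃ x : U, finrank K ((ker (tracePairing θ)).map (applyₗ x)) + 1 = finrank K V := by
  obtain ⟨f, x, hf, hx, rfl⟩ := exists_eq_smulRight_of_finrank_range_eq_one hθ
  exact ⟨x, by rw [map_applyₗ_ker_tracePairing_smulRight f hx,
    Dual.finrank_ker_add_one_of_ne_zero hf]⟩

end TracePairing

section QuasiRangeCompatible

/-- `F : S → V` is quasi-range-compatible with respect to `D`: it sends `s` into its range as soon
as that range does not contain `D`. Any subspace `D` is allowed, not only a line. -/
def QuasiRangeCompatible (S : Submodule K (U →ₗ[K] V)) (D : Submodule K V) (F : S → V) : Prop :=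
  ∀ s : S, ¬ D ≤ range (s : U →ₗ[K] V) → F s ∈ range (s : U →ₗ[K] V)

theorem QuasiRangeCompatible.apply_mem_span_singleton {S : Submodule K (U →ₗ[K] V)}
    {D : Submodule K V} {F : S → V} (hF : QuasiRangeCompatible S D F) (hD : D ≠ ⊥) {w : V}
    (hw : w ∉ D) (φ : Dual K U) (hφ : φ.smulRight w ∈ S) : F ⟨φ.smulRight w, hφ⟩ ∈ span K {w} := by
  have hw0 : w ≠ 0 := by rintro rfl; exact hw D.zero_mem
  have hrange : range (φ.smulRight w) ≤ span K {w} := by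
    rintro _ ⟨y, rfl⟩
    exact smul_mem _ _ (mem_span_singleton_self w)
  refine hrange (hF ⟨_, hφ⟩ fun hDw ↦ ?_)
  obtain h | h := (nonzero_span_atom w hw0).le_iff.1 (hDw.trans hrange)
  · exact hD h
  · exact hw (h ▸ mem_span_singleton_self w)

variable [FiniteDimensional K V] {θ : V →ₗ[K] U} {D : Submodule K V}

theorem QuasiRangeCompatible.map_mem_span_singleton {F : ker (tracePairing θ) → V}
    (hF : QuasiRangeCompatible _ D F) (hD : D ≠ ⊥) {w : V} (hw : w ∉ D) {f : Dual K V}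
    (hf : f w = 0) {A : V →ₗ[K] U} (hA : ∀ s : ker (tracePairing θ), f (F s) = tracePairing A s) :
    A w ∈ span K {θ w} := by
  by_contra hAw
  obtain ⟨φ, hφA, hφθ⟩ := exists_le_ker_of_notMem hAw
  have hφ : φ.smulRight w ∈ ker (tracePairing θ) := by
    rw [LinearMap.mem_ker, tracePairing_apply_smulRight]
    exact hφθ (mem_span_singleton_self _)
  obtain ⟨k, hk⟩ := mem_span_singleton.1 (hF.apply_mem_span_singleton hD hw φ hφ)
  apply hφA
  rw [← tracePairing_apply_smulRight, ← hA ⟨_, hφ⟩, ← hk, map_smul, hf, smul_zero]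

theorem forall_eq_apply_of_forall_eq_smulRight_add_smul {ι : Type*} (b : Basis ι K V)
    {F : ker (tracePairing θ) → V} {A : ι → V →ₗ[K] U}
    (hA : ∀ i (s : ker (tracePairing θ)), b.coord i (F s) = tracePairing (A i) s)
    (x : U) (c : ι → K) (hx : ∀ i, A i = (b.coord i).smulRight x + c i • θ)
    (s : ker (tracePairing θ)) : F s = (s : U →ₗ[K] V) x := by
  refine b.ext_elem fun i ↦ ?_
  have hs : tracePairing θ s = 0 := s.2
  change b.coord i (F s) = b.coord i (s.1 x)
  rw [hA, hx, map_add, map_smul, LinearMap.add_apply, tracePairing_smulRight_apply,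
    LinearMap.smul_apply, hs, smul_zero, add_zero]

theorem QuasiRangeCompatible.exists_eq_apply [FiniteDimensional K U] (hK : 3 < Cardinal.mk K)
    (hV : finrank K V = 2) (hθ : θ = 0 ∨ Function.Injective θ) (hD : finrank K D = 1)
    {F : ker (tracePairing θ) →ₗ[K] V} (hF : QuasiRangeCompatible _ D F) :
    ∃ x : U, ∀ s : ker (tracePairing θ), F s = (s : U →ₗ[K] V) x := by
  obtain ⟨b, hb₀, hb₁⟩ := exists_basis_fin_two_adapted hV hD
  choose A hA using fun i ↦ exists_forall_eq_tracePairing (b.coord i ∘ₗ F)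
  have hmem (t : K) : (A 1 - t • A 0) (b 0 + t • b 1) ∈ span K {θ (b 0 + t • b 1)} := by
    have hw : b 0 + t • b 1 ∉ D := by rwa [D.add_mem_iff_left (D.smul_mem t hb₁)]
    refine hF.map_mem_span_singleton (by rintro rfl; simp at hD) hw
      (f := b.coord 1 - t • b.coord 0) (by simp) fun s ↦ ?_
    simp only [map_sub, map_smul, LinearMap.sub_apply, LinearMap.smul_apply, ← hA,
      LinearMap.comp_apply]
  obtain ⟨α, β, h₀, h₁, h₂⟩ := exists_affine_factor_of_eq_zero_or_injective hK b hθ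
    (c₀ := A 1 (b 0)) (c₁ := A 1 (b 1) - A 0 (b 0)) (c₂ := -A 0 (b 1)) fun t ↦ by
      convert hmem t using 1
      simp only [LinearMap.sub_apply, LinearMap.smul_apply, map_add, map_smul]
      module
  refine ⟨A 0 (b 0) + β • θ (b 0),
    forall_eq_apply_of_forall_eq_smulRight_add_smul b hA _ ![-β, α] fun i ↦ b.ext fun j ↦ ?_⟩
  fin_cases i <;> fin_cases j
  · simp
  · simpa [neg_eq_iff_eq_neg] using h₂
  · simpa using h₀
  · rw [sub_eq_iff_eq_add] at h₁
    suffices A 1 (b 1) = A 0 (b 0) + β • θ (b 0) + α • θ (b 1) by simpa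
    rw [h₁]
    abel

end QuasiRangeCompatible

end LinearMaps

/-- Let `K` have more than 3 elements, `dim V = 2`, and `S` a linear
subspace of `L(U,V)` with `codim S ≤ 2 dim V − 3`. Then either `S` has special type 1
(there is `x ∈ U` with `dim Sx = 1`), or every quasi-range-compatible `K`-linear map
`F : S → V` is local. -/
theorem quasi_range_compatible_linear_map_local_or_special_type_one
    (K U V : Type*) [Field K] (hK : 3 < Cardinal.mk K)
    [AddCommGroup U] [Module K U] [FiniteDimensional K U]
    [AddCommGroup V] [Module K V] [FiniteDimensional K V]
    (hV : Module.finrank K V = 2)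
    (S : Submodule K (U →ₗ[K] V))
    (h1 : Module.finrank K (U →ₗ[K] V) + 3 ≤
      Module.finrank K S + 2 * Module.finrank K V) :
    (∃ x : U, Module.finrank K (Submodule.map (LinearMap.applyₗ x) S) = 1) ∨
    (∀ F : ↥S →ₗ[K] V,
      (∃ D : Submodule K V, Module.finrank K D = 1 ∧
        ∀ s : ↥S, ¬ D ≤ LinearMap.range (s : U →ₗ[K] V) →
          F s ∈ LinearMap.range (s : U →ₗ[K] V)) →
      ∃ x : U, ∀ s : ↥S, F s = (s : U →ₗ[K] V) x) := by
  rw [hV] at h1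
  obtain ⟨ψ, rfl⟩ := exists_eq_ker_of_finrank_le_add_one S (by omega)
  obtain ⟨θ, rfl⟩ := tracePairing_surjective ψ
  by_cases hθ : finrank K (range θ) = 1
  · obtain ⟨x, hx⟩ := exists_finrank_map_applyₗ_add_one_of_finrank_range_eq_one hθ
    exact .inl ⟨x, by omega⟩
  · right
    rintro F ⟨D, hD, hF⟩
    have hθ' := eq_zero_or_injective_of_finrank_range_ne_one hV hθ
    exact QuasiRangeCompatible.exists_eq_apply hK hV hθ' hD hF
end
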